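/- Fix an integer k ≥ 2, pairwise distinct rationals μ_1,…,μ_k, and an integer n_0. For 1 ≤ i ≤ k define the polynomial p̄_i ∈ ℚ[n] by p̄_i(n) = Σ_{ℓ=0}^{k} (−2)^ℓ (n−1−ℓ)_{k−ℓ} · e_ℓ(μ_1(n−n_0),…,μ_{i−1}(n−n_0), μ_i(n−n_0)−1, μ_{i+1}(n−n_0),…,μ_k(n−n_0)), where (m)_j = m(m−1)⋯(m−j+1). Then the ℚ-linear span of {p̄_1,…,p̄_k} inside ℚ[n] has dimension at least k−2. -/

import Mathlib

open Polynomial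

/-- `pbar k μ n0 i` is the polynomial
`p̄_i(n) = Σ_{ℓ=0}^{k} (−2)^ℓ (n−1−ℓ)_{k−ℓ} ·
  e_ℓ(μ_1(n−n_0),…,μ_i(n−n_0)−1,…,μ_k(n−n_0)) ∈ ℚ[n]`,
where `(n−1−ℓ)_{k−ℓ} = Π_{t=0}^{k−ℓ−1} (n−1−ℓ−t)`. -/
noncomputable def pbar (k : ℕ) (μ : Fin k → ℚ) (n0 : ℚ) (i : Fin k) : ℚ[X] :=
  ∑ l ∈ Finset.range (k + 1),
    (-2 : ℚ[X]) ^ l *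
      (∏ t ∈ Finset.range (k - l), (X - C ((1 + l + t : ℕ) : ℚ))) *
      ∑ S ∈ Finset.powersetCard l (Finset.univ : Finset (Fin k)),
        ∏ m ∈ S, (C (μ m) * (X - C n0) - if m = i then 1 else 0)

/-- elementary symmetric sum over a finset -/
noncomputable def es12 {R : Type*} [CommRing R] {k : ℕ} (s : Finset (Fin k)) (f : Fin k → R)
    (l : ℕ) : R :=
  ∑ S ∈ Finset.powersetCard l s, ∏ m ∈ S, f m

lemma es12_zero {R : Type*} [CommRing R] {k : ℕ} (s : Finset (Fin k)) (f : Fin k → R) :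
    es12 s f 0 = 1 := by
  simp [es12]

lemma es12_insert {R : Type*} [CommRing R] {k : ℕ} (s : Finset (Fin k)) (f : Fin k → R)
    (i : Fin k) (hi : i ∉ s) (l : ℕ) :
    es12 (insert i s) f (l + 1) = es12 s f (l + 1) + f i * es12 s f l := by
  unfold es12
  rw [Finset.powersetCard_succ_insert hi, Finset.sum_union, Finset.sum_image, Finset.mul_sum]
  · congr 1
    apply Finset.sum_congr rfl
    intro S hS
    rw [Finset.mem_powersetCard] at hS
    rw [Finset.prod_insert (fun h => hi (hS.1 h))]
  · intro S hS T hT h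
    have hS' := (Finset.mem_powersetCard.1 hS).1
    have hT' := (Finset.mem_powersetCard.1 hT).1
    have h1 : i ∉ S := fun h => hi (hS' h)
    have h2 : i ∉ T := fun h => hi (hT' h)
    have h3 : insert i S = insert i T := h
    rw [← Finset.erase_insert h1, ← Finset.erase_insert h2, h3]
  · rw [Finset.disjoint_left]
    intro S hS hS'
    obtain ⟨T, hT, rfl⟩ := Finset.mem_image.1 hS'
    exact hi ((Finset.mem_powersetCard.1 hS).1 (Finset.mem_insert_self _ _))

lemma es12_univ {R : Type*} [CommRing R] {k : ℕ} (f : Fin k → R) (i : Fin k) (l : ℕ) :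
    es12 Finset.univ f (l + 1) =
      es12 (Finset.univ.erase i) f (l + 1) + f i * es12 (Finset.univ.erase i) f l := by
  rw [← es12_insert _ _ _ (Finset.notMem_erase _ _), Finset.insert_erase (Finset.mem_univ _)]

lemma es12_congr {R : Type*} [CommRing R] {k : ℕ} (s : Finset (Fin k)) (f g : Fin k → R)
    (h : ∀ m ∈ s, f m = g m) (l : ℕ) : es12 s f l = es12 s g l := by
  unfold es12
  refine Finset.sum_congr rfl fun S hS => Finset.prod_congr rfl fun m hm => h m ?_
  exact (Finset.mem_powersetCard.1 hS).1 hm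

lemma es12_scale {k : ℕ} (s : Finset (Fin k)) (f : Fin k → ℚ) (y : ℚ[X]) (l : ℕ) :
    es12 s (fun m => C (f m) * y) l = y ^ l * C (es12 s f l) := by
  unfold es12
  rw [map_sum, Finset.mul_sum]
  refine Finset.sum_congr rfl fun S hS => ?_
  rw [Finset.prod_mul_distrib, Finset.prod_const, (Finset.mem_powersetCard.1 hS).2, map_prod,
    mul_comm]

lemma es12_erase {k : ℕ} (f : Fin k → ℚ) (i : Fin k) (l : ℕ) :
    es12 (Finset.univ.erase i) f l =
      ∑ s ∈ Finset.range (l + 1), (- f i) ^ s * es12 Finset.univ f (l - s) := by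
  induction l with
  | zero => simp [es12_zero]
  | succ l ih =>
    have h := es12_univ f i l
    rw [Finset.sum_range_succ']
    have : ∑ s ∈ Finset.range (l + 1), (- f i) ^ (s + 1) * es12 Finset.univ f (l + 1 - (s + 1))
        = - f i * es12 (Finset.univ.erase i) f l := by
      rw [ih, Finset.mul_sum]
      refine Finset.sum_congr rfl fun s _ => ?_
      rw [Nat.add_sub_add_right]; ring
    rw [this]
    simp only [pow_zero, one_mul, Nat.sub_zero]
    rw [h]; ring

noncomputable def D12 (k l : ℕ) : ℚ[X] :=
  ∏ t ∈ Finset.range (k - l), (X - C ((1 + l + t : ℕ) : ℚ))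

noncomputable def R12 (k : ℕ) (μ : Fin k → ℚ) (n0 : ℚ) (s : ℕ) : ℚ[X] :=
  ∑ l ∈ Finset.Ico s k, (-2 : ℚ[X]) ^ (l + 1) * D12 k (l + 1) *
    ((X - C n0) ^ l * C (es12 Finset.univ μ (l - s)))

noncomputable def A12 (k : ℕ) (μ : Fin k → ℚ) (n0 : ℚ) : ℚ[X] :=
  ∑ l ∈ Finset.range (k + 1), (-2 : ℚ[X]) ^ l * D12 k l *
    es12 Finset.univ (fun m => C (μ m) * (X - C n0)) l

lemma pbar12_eq (k : ℕ) (μ : Fin k → ℚ) (n0 : ℚ) (i : Fin k) :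
    pbar k μ n0 i = A12 k μ n0 - ∑ s ∈ Finset.range k, C ((- μ i) ^ s) * R12 k μ n0 s := by
  have h0 : pbar k μ n0 i = ∑ l ∈ Finset.range (k + 1), (-2 : ℚ[X]) ^ l * D12 k l *
      es12 Finset.univ (fun m => C (μ m) * (X - C n0) - if m = i then 1 else 0) l := rfl
  have h1 : ∑ s ∈ Finset.range k, C ((- μ i) ^ s) * R12 k μ n0 s =
      ∑ l ∈ Finset.range k, (-2 : ℚ[X]) ^ (l + 1) * D12 k (l + 1) *
        es12 (Finset.univ.erase i) (fun m => C (μ m) * (X - C n0)) l := by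
    simp only [R12, es12_scale, es12_erase, map_sum, Finset.mul_sum]
    rw [Finset.sum_comm' (t' := Finset.range k) (s' := fun l => Finset.range (l + 1))]
    · refine Finset.sum_congr rfl fun l _ => Finset.sum_congr rfl fun s _ => ?_
      rw [C_mul]; ring
    · intro s l
      simp only [Finset.mem_range, Finset.mem_Ico]
      omega
  rw [h0, h1, A12, Finset.sum_range_succ', Finset.sum_range_succ' _ k, es12_zero, es12_zero,
    add_sub_right_comm, ← Finset.sum_sub_distrib]
  congr 1
  refine Finset.sum_congr rfl fun l _ => ?_
  rw [es12_univ _ i, es12_univ _ i]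
  have hc : ∀ l, es12 (Finset.univ.erase i)
      (fun m => C (μ m) * (X - C n0) - if m = i then (1 : ℚ[X]) else 0) l =
      es12 (Finset.univ.erase i) (fun m => C (μ m) * (X - C n0)) l := by
    intro l
    apply es12_congr
    intro m hm
    simp [Finset.ne_of_mem_erase hm]
  rw [hc, hc]
  simp only [if_true]
  ring

lemma R12_mem (k : ℕ) (μ : Fin k → ℚ) (hμ : Function.Injective μ) (n0 : ℚ) (s : ℕ)
    (hs1 : 1 ≤ s) (hsk : s < k) :
    R12 k μ n0 s ∈ Submodule.span ℚ (Set.range (pbar k μ n0)) := by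
  set M := Matrix.vandermonde (fun i => - μ i) with hM
  have hdet : IsUnit M.det := by
    rw [isUnit_iff_ne_zero, hM, Matrix.det_vandermonde_ne_zero_iff]
    exact fun a b h => hμ (neg_injective h)
  have hinv := Matrix.nonsing_inv_mul M hdet
  set v : Fin k → ℚ := fun i => M⁻¹ ⟨s, hsk⟩ i with hv
  have hvr : ∀ r (hr : r < k), ∑ i, v i * (- μ i) ^ r = if s = r then 1 else 0 := by
    intro r hr
    have := congrFun (congrFun hinv ⟨s, hsk⟩) ⟨r, hr⟩
    rw [Matrix.mul_apply, Matrix.one_apply] at this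
    simpa [hM, Matrix.vandermonde_apply, hv] using this
  have key : R12 k μ n0 s = - ∑ i, v i • pbar k μ n0 i := by
    have e1 : ∑ i, v i • pbar k μ n0 i = C (∑ i, v i * (- μ i) ^ 0) * A12 k μ n0 -
        ∑ r ∈ Finset.range k, C (∑ i, v i * (- μ i) ^ r) * R12 k μ n0 r := by
      simp only [pbar12_eq, smul_sub, Finset.sum_sub_distrib, map_sum, Finset.sum_mul,
        smul_eq_C_mul, Finset.mul_sum]
      congr 1
      · simp
      · rw [Finset.sum_comm]
        refine Finset.sum_congr rfl fun l _ => Finset.sum_congr rfl fun s _ => ?_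
        rw [C_mul]; ring
    rw [e1, hvr 0 (by omega), if_neg (by omega)]
    have e2 : ∑ r ∈ Finset.range k, C (∑ i, v i * (- μ i) ^ r) * R12 k μ n0 r =
        ∑ r ∈ Finset.range k, if s = r then R12 k μ n0 r else 0 := by
      refine Finset.sum_congr rfl fun r hr => ?_
      rw [hvr r (Finset.mem_range.1 hr)]
      split_ifs <;> simp
    rw [e2, Finset.sum_ite_eq, if_pos (Finset.mem_range.2 hsk)]
    simp
  rw [key]
  refine Submodule.neg_mem _ (Submodule.sum_mem _ fun i _ => Submodule.smul_mem _ _ ?_)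
  exact Submodule.subset_span ⟨i, rfl⟩

lemma D12_eval_ne (k l : ℕ) (n0 : ℤ) (h : ¬ ((l : ℤ) + 1 ≤ n0 ∧ n0 ≤ k)) :
    (D12 k l).eval (n0 : ℚ) ≠ 0 := by
  rw [D12, eval_prod, Finset.prod_ne_zero_iff]
  intro t ht hz
  rw [Finset.mem_range] at ht
  simp only [eval_sub, eval_X, eval_C, sub_eq_zero] at hz
  have : n0 = ((1 + l + t : ℕ) : ℤ) := by exact_mod_cast hz
  omega

lemma D12_factor (k l : ℕ) (n0 : ℤ) (h1 : (l : ℤ) + 1 ≤ n0) (h2 : n0 ≤ k) :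
    ∃ E : ℚ[X], D12 k l = (X - C (n0 : ℚ)) * E ∧ E.eval (n0 : ℚ) ≠ 0 := by
  obtain ⟨u, hu⟩ : ∃ u : ℕ, n0 = ((1 + l + u : ℕ) : ℤ) := ⟨(n0 - 1 - l).toNat, by omega⟩
  have hmem : u ∈ Finset.range (k - l) := by rw [Finset.mem_range]; omega
  refine ⟨∏ t ∈ (Finset.range (k - l)).erase u, (X - C ((1 + l + t : ℕ) : ℚ)), ?_, ?_⟩
  · rw [D12, ← Finset.mul_prod_erase _ _ hmem, hu]
    simp
  · rw [eval_prod, Finset.prod_ne_zero_iff]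
    intro t ht hz
    simp only [eval_sub, eval_X, eval_C, sub_eq_zero] at hz
    have : n0 = ((1 + l + t : ℕ) : ℤ) := by exact_mod_cast hz
    exact Finset.ne_of_mem_erase ht (by omega)

/-- the order of vanishing of `R12 s` at `n0`, for `s + 2 ≠ n0` -/
noncomputable def d12 (k : ℕ) (n0 : ℤ) (s : ℕ) : ℕ :=
  if (s : ℤ) + 2 ≤ n0 ∧ n0 ≤ k then s + 1 else s

lemma R12_order (k : ℕ) (μ : Fin k → ℚ) (n0 : ℤ) (s : ℕ) (hsk : s < k)
    (hs : (s : ℤ) + 2 ≠ n0) :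
    ∃ T : ℚ[X], R12 k μ n0 s = (X - C (n0 : ℚ)) ^ d12 k n0 s * T ∧ T.eval (n0 : ℚ) ≠ 0 := by
  set y : ℚ[X] := X - C (n0 : ℚ) with hy
  have hy0 : y.eval (n0 : ℚ) = 0 := by simp [hy]
  have h2 : ∀ m : ℕ, ((-2 : ℚ[X]) ^ m).eval (n0 : ℚ) ≠ 0 := by
    intro m
    rw [eval_pow]
    apply pow_ne_zero
    rw [eval_neg, eval_ofNat]; norm_num
  have htail : ∀ a, ∃ G, ∑ l ∈ Finset.Ico a k, (-2 : ℚ[X]) ^ (l + 1) * D12 k (l + 1) *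
      (y ^ l * C (es12 Finset.univ μ (l - s))) = y ^ a * G := by
    intro a
    apply Finset.dvd_sum
    intro l hl
    exact Dvd.dvd.mul_left (Dvd.dvd.mul_right (pow_dvd_pow _ (Finset.mem_Ico.1 hl).1) _) _
  by_cases h : (s : ℤ) + 2 ≤ n0 ∧ n0 ≤ k
  · obtain ⟨E, hE, hE0⟩ := D12_factor k (s + 1) n0 (by push_cast; omega) h.2
    obtain ⟨E', hE', -⟩ := D12_factor k (s + 2) n0 (by push_cast; omega) h.2
    obtain ⟨G, hG⟩ := htail (s + 2)
    refine ⟨(-2) ^ (s + 1) * E + y * ((-2) ^ (s + 2) * E' * C (es12 Finset.univ μ 1) + G), ?_, ?_⟩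
    · rw [d12, if_pos h, R12, Finset.sum_eq_sum_Ico_succ_bot hsk,
        Finset.sum_eq_sum_Ico_succ_bot (by omega), ← hy, hG, hE, hE', ← hy, Nat.sub_self, es12_zero,
        Nat.add_sub_cancel_left]
      simp only [map_one]
      ring
    · rw [eval_add, eval_mul, eval_mul, hy0, zero_mul, add_zero]
      exact mul_ne_zero (h2 _) hE0
  · obtain ⟨G, hG⟩ := htail (s + 1)
    refine ⟨(-2) ^ (s + 1) * D12 k (s + 1) + y * G, ?_, ?_⟩
    · rw [d12, if_neg h, R12, Finset.sum_eq_sum_Ico_succ_bot hsk, ← hy, hG, Nat.sub_self, es12_zero]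
      simp only [map_one]
      ring
    · rw [eval_add, eval_mul, eval_mul, hy0, zero_mul, add_zero]
      refine mul_ne_zero (h2 _) (D12_eval_ne _ _ _ ?_)
      push_cast
      omega

lemma linInd12 (a : ℚ) (I : Finset ℕ) (f : ℕ → ℚ[X]) (d : ℕ → ℕ)
    (hd : ∀ s ∈ I, ∀ t ∈ I, s < t → d s < d t)
    (hf : ∀ s ∈ I, ∃ T : ℚ[X], f s = (X - C a) ^ d s * T ∧ T.eval a ≠ 0) :
    LinearIndependent ℚ (fun s : I => f s) := by
  rw [Fintype.linearIndependent_iff]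
  intro g hg
  have main : ∀ n : ℕ, ∀ hn : n ∈ I, g ⟨n, hn⟩ = 0 := by
    intro n
    induction n using Nat.strong_induction_on with
    | _ n ih =>
      intro hn
      by_contra hne
      obtain ⟨T, hT, hT0⟩ := hf n hn
      rw [← Finset.add_sum_erase _ _ (Finset.mem_univ (⟨n, hn⟩ : I))] at hg
      have hdvd : (X - C a) ^ (d n + 1) ∣
          ∑ x ∈ Finset.univ.erase (⟨n, hn⟩ : I), g x • f x := by
        apply Finset.dvd_sum
        rintro ⟨x, hx⟩ hxm
        have hxn : x ≠ n := fun h => Finset.ne_of_mem_erase hxm (Subtype.ext h)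
        rcases lt_or_gt_of_ne hxn with h | h
        · rw [ih x h hx, zero_smul]; exact dvd_zero _
        · obtain ⟨U, hU, -⟩ := hf x hx
          simp only [hU, smul_eq_C_mul]
          exact Dvd.dvd.mul_left (Dvd.dvd.mul_right (pow_dvd_pow _ (hd n hn x hx h)) _) _
      have h3 : (X - C a) ^ (d n + 1) ∣ g ⟨n, hn⟩ • f n := by
        rw [eq_neg_of_add_eq_zero_left hg]
        exact (dvd_neg).2 hdvd
      rw [hT, smul_eq_C_mul, mul_left_comm, pow_succ,
        mul_dvd_mul_iff_left (pow_ne_zero _ (X_sub_C_ne_zero a)), dvd_iff_isRoot, IsRoot,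
        eval_mul, eval_C] at h3
      exact mul_ne_zero hne hT0 h3
  rintro ⟨n, hn⟩
  exact main n hn

/-- For `k ≥ 2`, pairwise distinct rationals `μ_1,…,μ_k` and an integer `n_0`,
the ℚ-linear span of `{p̄_1,…,p̄_k}` in `ℚ[n]` has dimension at least `k − 2`. -/
theorem stmt12 (k : ℕ) (hk : 2 ≤ k) (μ : Fin k → ℚ) (hμ : Function.Injective μ)
    (n0 : ℤ) :
    k - 2 ≤ Module.finrank ℚ
      (Submodule.span ℚ (Set.range (pbar k μ (n0 : ℚ)))) := by
  set I : Finset ℕ := (Finset.Ico 1 k).filter (fun s => (s : ℤ) + 2 ≠ n0) with hI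
  have hcard : k - 2 ≤ I.card := by
    have hsub : (Finset.Ico 1 k).erase (n0 - 2).toNat ⊆ I := by
      intro s hs
      rw [Finset.mem_erase] at hs
      rw [hI, Finset.mem_filter]
      refine ⟨hs.2, fun h => hs.1 ?_⟩
      omega
    have h1 := Finset.card_le_card hsub
    have h2 := Finset.pred_card_le_card_erase (s := Finset.Ico 1 k) (a := (n0 - 2).toNat)
    rw [Nat.card_Ico] at h2
    omega
  have hIm : ∀ s ∈ I, 1 ≤ s ∧ s < k ∧ (s : ℤ) + 2 ≠ n0 := by
    intro s hs
    rw [hI, Finset.mem_filter, Finset.mem_Ico] at hs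
    exact ⟨hs.1.1, hs.1.2, hs.2⟩
  have hli : LinearIndependent ℚ (fun s : I => R12 k μ (n0 : ℚ) s) := by
    refine linInd12 (n0 : ℚ) I _ (d12 k n0) ?_ ?_
    · intro s hs t ht hst
      have h1 := hIm s hs
      have h2 := hIm t ht
      unfold d12
      split_ifs <;> omega
    · intro s hs
      exact R12_order k μ n0 s (hIm s hs).2.1 (hIm s hs).2.2
  have hfr := finrank_span_eq_card hli
  rw [Fintype.card_coe] at hfr
  have : FiniteDimensional ℚ (Submodule.span ℚ (Set.range (pbar k μ (n0 : ℚ)))) :=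
    FiniteDimensional.span_of_finite ℚ (Set.finite_range _)
  have hle : Submodule.span ℚ (Set.range (fun s : I => R12 k μ (n0 : ℚ) s)) ≤
      Submodule.span ℚ (Set.range (pbar k μ (n0 : ℚ))) := by
    rw [Submodule.span_le]
    rintro _ ⟨⟨s, hs⟩, rfl⟩
    exact R12_mem k μ hμ n0 s (hIm s hs).1 (hIm s hs).2.1
  have := Submodule.finrank_mono hle
  omega
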